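/- For any line l of P²(𝔽₃) the vector w_𝒫 = ω²θ l + Σ_{x ∈ l} x (sum over the point roots on l) is independent of the choice of l, and for any point x the vector w_ℒ = −ωθ x + Σ_{l ∋ x} l is independent of the choice of x. One has |w_𝒫|² = |w_ℒ|² = 3 and ⟨w_𝒫, w_ℒ⟩ = −4θω; w_𝒫 is orthogonal to all 13 point roots and w_ℒ to all 13 line roots. The sublattice F spanned by w_𝒫 and w_ℒ is primitive in L, has signature (1,1) and discriminant 39, and equals the sublattice of L fixed pointwise by G. -/

import Mathlib

noncomputable section

open ComplexConjugate

namespace Bimonster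

/-- The primitive cube root of unity `ω = e^{2πi/3}`. -/
def ω : ℂ := Complex.exp (2 * (Real.pi : ℂ) * Complex.I / 3)

/-- `θ = ω - ω̄ = √-3`. -/
def θ : ℂ := ω - conj ω

/-- `ξ = e^{-πi/6}`. -/
def ξ : ℂ := Complex.exp (-((Real.pi : ℂ) * Complex.I) / 6)

/-- Membership in the ring of Eisenstein integers `ℰ = ℤ[ω] ⊆ ℂ`. -/
def EisP (z : ℂ) : Prop := ∃ a b : ℤ, z = (a : ℂ) + (b : ℂ) * ω

/-- The units of the ring of Eisenstein integers. -/
def EisUnit (z : ℂ) : Prop :=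
  z = 1 ∨ z = -1 ∨ z = ω ∨ z = -ω ∨ z = ω ^ 2 ∨ z = -ω ^ 2

/-- The underlying 14-dimensional complex vector space of `L = 3E₈ ⊕ H`. -/
abbrev V : Type := Fin 14 → ℂ

/-- The Hermitian form of `L = 3E₈ ⊕ H`: negative definite standard form on the twelve
`E₈`-coordinates, and the hyperbolic cell with Gram matrix `[[0, θ̄], [θ, 0]]` on the
last two coordinates.  It is conjugate-linear in the first variable. -/
def herm (u v : V) : ℂ :=
  -(∑ i : Fin 12, conj (u (Fin.castLE (by norm_num) i)) * v (Fin.castLE (by norm_num) i)) +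
    conj (u 12) * conj θ * v 13 + conj (u 13) * θ * v 12

/-- First generator of the ternary tetracode `𝒞₄ ⊆ 𝔽₃⁴`. -/
def tet1 : Fin 4 → ℤ := ![1, 1, -1, 0]

/-- Second generator of the ternary tetracode `𝒞₄ ⊆ 𝔽₃⁴`. -/
def tet2 : Fin 4 → ℤ := ![0, 1, 1, 1]

/-- The complex `E₈` lattice: vectors of `ℰ⁴` whose reduction mod `θ` lies in the
ternary tetracode. -/
def inE8 (w : Fin 4 → ℂ) : Prop :=
  (∀ i, EisP (w i)) ∧
    ∃ s t : ℤ, ∀ i : Fin 4, ∃ a b : ℤ,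
      w i - ((tet1 i * s + tet2 i * t : ℤ) : ℂ) = θ * ((a : ℂ) + (b : ℂ) * ω)

/-- The lattice `L = 3E₈ ⊕ H` as a subset of `ℂ¹⁴`. -/
def Lset : Set V :=
  {v | (∀ k : Fin 3,
      inE8 fun i : Fin 4 =>
        v ⟨4 * (k : ℕ) + (i : ℕ), by have hk := k.isLt; have hi := i.isLt; omega⟩) ∧
    EisP (v 12) ∧ EisP (v 13)}

/-- A root of `L`: a primitive lattice vector of norm `-3`. -/
def IsRoot (r : V) : Prop :=
  r ∈ Lset ∧ herm r r = -3 ∧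
    ∀ α : ℂ, EisP α → ∀ y ∈ Lset, r = α • y → EisUnit α

/-- The `μ`-reflection in a vector `r`: `v ↦ v − (1−μ)·r·⟨r,v⟩/|r|²`. -/
def reflMap (μ : ℂ) (r v : V) : V := v - ((1 - μ) * herm r v / herm r r) • r

/-- The automorphism group of the lattice `L`: invertible `ℂ`-linear maps preserving
the lattice and the Hermitian form. -/
def AutL : Subgroup (V ≃ₗ[ℂ] V) where
  carrier := {g | (∀ v : V, v ∈ Lset ↔ g v ∈ Lset) ∧ ∀ u v : V, herm (g u) (g v) = herm u v}
  one_mem' := ⟨fun _ => Iff.rfl, fun _ _ => rfl⟩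
  mul_mem' := by
    rintro f g ⟨hf1, hf2⟩ ⟨hg1, hg2⟩
    refine ⟨fun v => ?_, fun u v => ?_⟩
    · exact (hg1 v).trans (hf1 (g v))
    · exact (hf2 (g u) (g v)).trans (hg2 u v)
  inv_mem' := by
    rintro g ⟨hg1, hg2⟩
    refine ⟨fun v => ?_, fun u v => ?_⟩
    · have h := hg1 (g.symm v)
      have hv : g (g.symm v) = v := g.apply_symm_apply v
      rw [hv] at h
      exact h.symm
    · have h := hg2 (g.symm u) (g.symm v)
      have hu : g (g.symm u) = u := g.apply_symm_apply u
      have hv : g (g.symm v) = v := g.apply_symm_apply v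
      rw [hu, hv] at h
      exact h.symm

/-- The set of elements of `Aut(L)` acting as the `ω`-reflection in some root
belonging to `S`. -/
def ReflAutos (S : Set V) : Set (V ≃ₗ[ℂ] V) :=
  {g | g ∈ AutL ∧ ∃ r ∈ S, ∀ v, g v = reflMap ω r v}

/-- The reflection group `R(L)`: the subgroup of `Aut(L)` generated by the
`ω`-reflections in all roots of `L`. -/
def RL : Subgroup (V ≃ₗ[ℂ] V) := Subgroup.closure (ReflAutos {r | IsRoot r})

/-- Two roots are adjacent when `|⟨a,b⟩| = √3`, i.e. when their `ω`-reflections braid. -/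
def Adj (a b : V) : Prop := ‖herm a b‖ = Real.sqrt 3

/-- A set of roots is connected if the graph given by adjacency on it is connected. -/
def ConnectedSet (Φ : Set V) : Prop :=
  ∀ a ∈ Φ, ∀ b ∈ Φ, Relation.ReflTransGen (fun x y => x ∈ Φ ∧ y ∈ Φ ∧ Adj x y) a b

/-- `Rad Φ` is the radical of a set `Φ` of roots: the closure of `Φ` under reflecting
members of the set in each other (and identification of unit multiples). -/
inductive Rad (Φ : Set V) : V → Prop
  | base {r : V} : r ∈ Φ → Rad Φ r
  | refl {a b : V} : Rad Φ a → Rad Φ b → Rad Φ (reflMap ω a b)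
  | inv {a b : V} : Rad Φ a → Rad Φ b → Rad Φ (reflMap (conj ω) a b)
  | unit {u : ℂ} {r : V} : EisUnit u → Rad Φ r → Rad Φ (u • r)

/-- Shorthand for the entry `-θω²` occurring in the coordinates of the 26 roots. -/
def qc : ℂ := -(θ * ω ^ 2)

/- The 26 roots of the diagram `D` in the coordinate system `3E₈ ⊕ H`. -/

def rA : V := ![0, 0, 0, 0, 0, 0, 0, 0, 0, 0, 0, 0, 1, ω ^ 2]
def rC1 : V := ![qc, 0, 0, 0, 0, 0, 0, 0, 0, 0, 0, 0, 0, 0]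
def rC2 : V := ![0, 0, 0, 0, qc, 0, 0, 0, 0, 0, 0, 0, 0, 0]
def rC3 : V := ![0, 0, 0, 0, 0, 0, 0, 0, qc, 0, 0, 0, 0, 0]
def rE1 : V := ![0, qc, 0, 0, 0, 0, 0, 0, 0, 0, 0, 0, 0, 0]
def rE2 : V := ![0, 0, 0, 0, 0, qc, 0, 0, 0, 0, 0, 0, 0, 0]
def rE3 : V := ![0, 0, 0, 0, 0, 0, 0, 0, 0, qc, 0, 0, 0, 0]
def rA1 : V := ![0, 0, 0, 0, 0, 0, 0, qc, 0, 0, 0, qc, ω, ω ^ 2]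
def rA2 : V := ![0, 0, 0, qc, 0, 0, 0, 0, 0, 0, 0, qc, ω, ω ^ 2]
def rA3 : V := ![0, 0, 0, qc, 0, 0, 0, qc, 0, 0, 0, 0, ω, ω ^ 2]
def rG1 : V := ![0, 0, 0, qc, 0, 0, -qc, qc, 0, 0, -qc, qc, 2 * ω, 2 * ω ^ 2]
def rG2 : V := ![0, 0, -qc, qc, 0, 0, 0, qc, 0, 0, -qc, qc, 2 * ω, 2 * ω ^ 2]
def rG3 : V := ![0, 0, -qc, qc, 0, 0, -qc, qc, 0, 0, 0, qc, 2 * ω, 2 * ω ^ 2]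
def rF : V := ![0, 1, 1, -2, 0, 1, 1, -2, 0, 1, 1, -2, -2 + ω, -θ]
def rB1 : V := ![1, 0, 1, -1, 0, 0, 0, 0, 0, 0, 0, 0, -1, 0]
def rB2 : V := ![0, 0, 0, 0, 1, 0, 1, -1, 0, 0, 0, 0, -1, 0]
def rB3 : V := ![0, 0, 0, 0, 0, 0, 0, 0, 1, 0, 1, -1, -1, 0]
def rD1 : V := ![1, 1, -1, 0, 0, 0, 0, 0, 0, 0, 0, 0, 0, 0]
def rD2 : V := ![0, 0, 0, 0, 1, 1, -1, 0, 0, 0, 0, 0, 0, 0]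
def rD3 : V := ![0, 0, 0, 0, 0, 0, 0, 0, 1, 1, -1, 0, 0, 0]
def rF1 : V := ![0, 1, 1, 1, 0, 0, 0, 0, 0, 0, 0, 0, 0, 0]
def rF2 : V := ![0, 0, 0, 0, 0, 1, 1, 1, 0, 0, 0, 0, 0, 0]
def rF3 : V := ![0, 0, 0, 0, 0, 0, 0, 0, 0, 1, 1, 1, 0, 0]
def rZ1 : V := ![0, 1, 1, -2, 1, 0, 1, -1, 1, 0, 1, -1, qc, -θ]
def rZ2 : V := ![1, 0, 1, -1, 0, 1, 1, -2, 1, 0, 1, -1, qc, -θ]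
def rZ3 : V := ![1, 0, 1, -1, 1, 0, 1, -1, 0, 1, 1, -2, qc, -θ]

/-- The 13 roots of `D` labelled by the points of `P²(𝔽₃)`. -/
def pt : Fin 13 → V :=
  ![rA, rC1, rC2, rC3, rE1, rE2, rE3, rA1, rA2, rA3, rG1, rG2, rG3]

/-- The 13 roots of `D` labelled by the lines of `P²(𝔽₃)`. -/
def lnr : Fin 13 → V :=
  ![rF, rB1, rB2, rB3, rD1, rD2, rD3, rF1, rF2, rF3, rZ1, rZ2, rZ3]

/-- The 26 roots of the diagram `D` (the incidence graph of `P²(𝔽₃)`). -/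
def D26 : Set V := Set.range pt ∪ Set.range lnr

/-- The 16 roots forming the `M₆₆₆` diagram. -/
def M16 : Set V :=
  Set.range
    (![rA, rB1, rB2, rB3, rC1, rC2, rC3, rD1, rD2, rD3, rE1, rE2, rE3, rF1, rF2, rF3] :
      Fin 16 → V)

/-- The 26 vectors `(ρ₁,…,ρ₂₆) = (x₁,…,x₁₃, ξl₁,…,ξl₁₃)`. -/
def ρv : Fin 26 → V := fun i =>
  if h : (i : ℕ) < 13 then pt ⟨(i : ℕ), h⟩
  else ξ • lnr ⟨(i : ℕ) - 13, by have := i.isLt; omega⟩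

/-- The Weyl vector `ρ̄ = (Σ points + ξ Σ lines)/26`. -/
def ρbar : V := (26 : ℂ)⁻¹ • ((∑ i : Fin 13, pt i) + ξ • ∑ i : Fin 13, lnr i)

/-- The height of a root: `ht(r) = |⟨ρ̄, r⟩| / |ρ̄|²`. -/
def ht (r : V) : ℝ := ‖herm ρbar r‖ / ‖herm ρbar ρbar‖

/-- The subgroup `G ≅ PGL₃(𝔽₃)` of `Aut(L)`: automorphisms of `L` preserving the set
of 13 point roots and the set of 13 line roots of the diagram `D`. -/
def Gsub : Subgroup (V ≃ₗ[ℂ] V) where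
  carrier := {g | g ∈ AutL ∧ (⇑g) '' Set.range pt = Set.range pt ∧
    (⇑g) '' Set.range lnr = Set.range lnr}
  one_mem' := by
    refine ⟨one_mem AutL, ?_, ?_⟩ <;> simp
  mul_mem' := by
    rintro f g ⟨hf0, hf1, hf2⟩ ⟨hg0, hg1, hg2⟩
    refine ⟨mul_mem hf0 hg0, ?_, ?_⟩
    · have hco : (⇑(f * g)) = (⇑f) ∘ (⇑g) := rfl
      rw [hco, Set.image_comp, hg1, hf1]
    · have hco : (⇑(f * g)) = (⇑f) ∘ (⇑g) := rfl
      rw [hco, Set.image_comp, hg2, hf2]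
  inv_mem' := by
    rintro g ⟨hg0, hg1, hg2⟩
    refine ⟨inv_mem hg0, ?_, ?_⟩
    · conv_lhs => rw [← hg1]
      rw [← Set.image_comp]
      have : (⇑g⁻¹ ∘ ⇑g) = id := by
        funext x; exact g.symm_apply_apply x
      rw [this, Set.image_id]
    · conv_lhs => rw [← hg2]
      rw [← Set.image_comp]
      have : (⇑g⁻¹ ∘ ⇑g) = id := by
        funext x; exact g.symm_apply_apply x
      rw [this, Set.image_id]

/-- The defining properties of the automorphism `σ`: it is an automorphism of `L`
which, for the polarity `δ` of `P²(𝔽₃)` pairing each point `x = [a:b:c]` with the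
line `l = {aX+bY+cZ = 0}`, sends the point root `x` to `-ω·l` and the line root `l`
to `x`. -/
def SigmaSpec (σ : V ≃ₗ[ℂ] V) : Prop :=
  σ ∈ AutL ∧ ∃ δ : Fin 13 ≃ Fin 13,
    (∀ i j, Adj (pt i) (lnr (δ j)) ↔ Adj (pt j) (lnr (δ i))) ∧
    (∀ i, σ (pt i) = (-ω) • lnr (δ i)) ∧
    (∀ i, σ (lnr (δ i)) = pt i)

/-- The group `Q` generated by `G` and `σ`. -/
def QGroup (σ : V ≃ₗ[ℂ] V) : Subgroup (V ≃ₗ[ℂ] V) :=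
  Subgroup.closure ({σ} ∪ (Gsub : Set (V ≃ₗ[ℂ] V)))

open scoped Classical in
/-- For a line root `l`, the vector `w_𝒫 = ω²θl + Σ_{x ∈ l} x`. -/
def wPvec (l : V) : V :=
  (ω ^ 2 * θ) • l + ∑ i : Fin 13, if Adj (pt i) l then pt i else 0

open scoped Classical in
/-- For a point root `x`, the vector `w_ℒ = -ωθx + Σ_{l ∋ x} l`. -/
def wLvec (x : V) : V :=
  (-(ω * θ)) • x + ∑ i : Fin 13, if Adj x (lnr i) then lnr i else 0

open scoped Pointwise in
/-- The `ℰ`-span of a set of vectors (`ℰ = ℤ[ω]`, so this is the `ℤ`-span of the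
set together with its `ω`-multiples). -/
def EisSpan (S : Set V) : Set V :=
  (Submodule.span ℤ (S ∪ ω • S) : Submodule ℤ V)

/-! ### A computable model of Eisenstein integers and vectors -/

/-- multiplication of `a + bω` and `c + dω` in coordinates -/
def mE (x y : ℤ × ℤ) : ℤ × ℤ :=
  (x.1 * y.1 - x.2 * y.2, x.1 * y.2 + x.2 * y.1 - x.2 * y.2)

/-- conjugation in coordinates -/
def cE (x : ℤ × ℤ) : ℤ × ℤ := (x.1 - x.2, -x.2)

abbrev VE : Type := Fin 14 → ℤ × ℤ

def hermE (u v : VE) : ℤ × ℤ :=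
  -(mE (cE (u 0)) (v 0) + mE (cE (u 1)) (v 1) + mE (cE (u 2)) (v 2) + mE (cE (u 3)) (v 3) +
    mE (cE (u 4)) (v 4) + mE (cE (u 5)) (v 5) + mE (cE (u 6)) (v 6) + mE (cE (u 7)) (v 7) +
    mE (cE (u 8)) (v 8) + mE (cE (u 9)) (v 9) + mE (cE (u 10)) (v 10) + mE (cE (u 11)) (v 11)) +
    mE (mE (cE (u 12)) (-1, -2)) (v 13) + mE (mE (cE (u 13)) (1, 2)) (v 12)

def ptE : Fin 13 → VE :=
  ![![(0,0), (0,0), (0,0), (0,0), (0,0), (0,0), (0,0), (0,0), (0,0), (0,0), (0,0), (0,0), (1,0), (-1,-1)],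
    ![(-1,1), (0,0), (0,0), (0,0), (0,0), (0,0), (0,0), (0,0), (0,0), (0,0), (0,0), (0,0), (0,0), (0,0)],
    ![(0,0), (0,0), (0,0), (0,0), (-1,1), (0,0), (0,0), (0,0), (0,0), (0,0), (0,0), (0,0), (0,0), (0,0)],
    ![(0,0), (0,0), (0,0), (0,0), (0,0), (0,0), (0,0), (0,0), (-1,1), (0,0), (0,0), (0,0), (0,0), (0,0)],
    ![(0,0), (-1,1), (0,0), (0,0), (0,0), (0,0), (0,0), (0,0), (0,0), (0,0), (0,0), (0,0), (0,0), (0,0)],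
    ![(0,0), (0,0), (0,0), (0,0), (0,0), (-1,1), (0,0), (0,0), (0,0), (0,0), (0,0), (0,0), (0,0), (0,0)],
    ![(0,0), (0,0), (0,0), (0,0), (0,0), (0,0), (0,0), (0,0), (0,0), (-1,1), (0,0), (0,0), (0,0), (0,0)],
    ![(0,0), (0,0), (0,0), (0,0), (0,0), (0,0), (0,0), (-1,1), (0,0), (0,0), (0,0), (-1,1), (0,1), (-1,-1)],
    ![(0,0), (0,0), (0,0), (-1,1), (0,0), (0,0), (0,0), (0,0), (0,0), (0,0), (0,0), (-1,1), (0,1), (-1,-1)],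
    ![(0,0), (0,0), (0,0), (-1,1), (0,0), (0,0), (0,0), (-1,1), (0,0), (0,0), (0,0), (0,0), (0,1), (-1,-1)],
    ![(0,0), (0,0), (0,0), (-1,1), (0,0), (0,0), (1,-1), (-1,1), (0,0), (0,0), (1,-1), (-1,1), (0,2), (-2,-2)],
    ![(0,0), (0,0), (1,-1), (-1,1), (0,0), (0,0), (0,0), (-1,1), (0,0), (0,0), (1,-1), (-1,1), (0,2), (-2,-2)],
    ![(0,0), (0,0), (1,-1), (-1,1), (0,0), (0,0), (1,-1), (-1,1), (0,0), (0,0), (0,0), (-1,1), (0,2), (-2,-2)]]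

def lnE : Fin 13 → VE :=
  ![![(0,0), (1,0), (1,0), (-2,0), (0,0), (1,0), (1,0), (-2,0), (0,0), (1,0), (1,0), (-2,0), (-2,1), (-1,-2)],
    ![(1,0), (0,0), (1,0), (-1,0), (0,0), (0,0), (0,0), (0,0), (0,0), (0,0), (0,0), (0,0), (-1,0), (0,0)],
    ![(0,0), (0,0), (0,0), (0,0), (1,0), (0,0), (1,0), (-1,0), (0,0), (0,0), (0,0), (0,0), (-1,0), (0,0)],
    ![(0,0), (0,0), (0,0), (0,0), (0,0), (0,0), (0,0), (0,0), (1,0), (0,0), (1,0), (-1,0), (-1,0), (0,0)],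
    ![(1,0), (1,0), (-1,0), (0,0), (0,0), (0,0), (0,0), (0,0), (0,0), (0,0), (0,0), (0,0), (0,0), (0,0)],
    ![(0,0), (0,0), (0,0), (0,0), (1,0), (1,0), (-1,0), (0,0), (0,0), (0,0), (0,0), (0,0), (0,0), (0,0)],
    ![(0,0), (0,0), (0,0), (0,0), (0,0), (0,0), (0,0), (0,0), (1,0), (1,0), (-1,0), (0,0), (0,0), (0,0)],
    ![(0,0), (1,0), (1,0), (1,0), (0,0), (0,0), (0,0), (0,0), (0,0), (0,0), (0,0), (0,0), (0,0), (0,0)],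
    ![(0,0), (0,0), (0,0), (0,0), (0,0), (1,0), (1,0), (1,0), (0,0), (0,0), (0,0), (0,0), (0,0), (0,0)],
    ![(0,0), (0,0), (0,0), (0,0), (0,0), (0,0), (0,0), (0,0), (0,0), (1,0), (1,0), (1,0), (0,0), (0,0)],
    ![(0,0), (1,0), (1,0), (-2,0), (1,0), (0,0), (1,0), (-1,0), (1,0), (0,0), (1,0), (-1,0), (-1,1), (-1,-2)],
    ![(1,0), (0,0), (1,0), (-1,0), (0,0), (1,0), (1,0), (-2,0), (1,0), (0,0), (1,0), (-1,0), (-1,1), (-1,-2)],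
    ![(1,0), (0,0), (1,0), (-1,0), (1,0), (0,0), (1,0), (-1,0), (0,0), (1,0), (1,0), (-2,0), (-1,1), (-1,-2)]]

def wPE : VE := ![(0,0), (0,0), (1,-1), (-2,2), (0,0), (0,0), (1,-1), (-2,2), (0,0), (0,0), (1,-1), (-2,2), (0,4), (-4,-4)]

def wLE : VE := ![(1,0), (1,0), (2,0), (-3,0), (1,0), (1,0), (2,0), (-3,0), (1,0), (1,0), (2,0), (-3,0), (-3,2), (-2,-4)]

def sg : Fin 13 → Fin 13 := ![1, 2, 3, 10, 11, 12, 4, 6, 5, 7, 9, 8, 0]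

def tu : Fin 13 → Fin 13 := ![4, 12, 11, 1, 2, 3, 7, 8, 9, 0, 6, 5, 10]

lemma ω_val : ω = (-1 / 2 : ℝ) + (Real.sqrt 3 / 2 : ℝ) * Complex.I := by
  unfold ω
  have h : 2 * (Real.pi : ℂ) * Complex.I / 3 = ((2 * Real.pi / 3 : ℝ) : ℂ) * Complex.I := by
    push_cast; ring
  have e : 2 * Real.pi / 3 = Real.pi - Real.pi / 3 := by ring
  rw [h, Complex.exp_mul_I, ← Complex.ofReal_cos, ← Complex.ofReal_sin, e, Real.cos_pi_sub,
    Real.sin_pi_sub, Real.cos_pi_div_three, Real.sin_pi_div_three]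
  norm_num

lemma ω_re : ω.re = -1 / 2 := by rw [ω_val]; simp

lemma ω_im : ω.im = Real.sqrt 3 / 2 := by rw [ω_val]; simp

lemma s3 : Real.sqrt 3 * Real.sqrt 3 = 3 := Real.mul_self_sqrt (by norm_num)

lemma ω_sq : ω ^ 2 = -1 - ω := by
  apply Complex.ext
  · simp [pow_two, ω_re, ω_im]; nlinarith [s3]
  · simp [pow_two, ω_re, ω_im]; ring

lemma ω_conj : conj ω = -1 - ω := by
  apply Complex.ext
  · simp [ω_re]; norm_num
  · simp

lemma θ_val : θ = 1 + 2 * ω := by rw [θ, ω_conj]; ring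

lemma θ_sq : θ * θ = -3 := by rw [θ_val]; linear_combination 4 * ω_sq

lemma θ_conj : conj θ = -θ := by rw [θ]; simp

lemma θ_ne : θ ≠ 0 := by
  intro h
  have := θ_sq
  rw [h] at this
  norm_num at this

lemma qc_val : qc = -1 + ω := by
  rw [qc, θ_val]; linear_combination (-1 - 2 * ω) * ω_sq + 2 * ω_sq

/-- evaluation of the computable model -/
def ev : ℤ × ℤ →+ ℂ where
  toFun x := (x.1 : ℂ) + (x.2 : ℂ) * ω
  map_zero' := by simp
  map_add' x y := by simp; ring

lemma ev_apply (x : ℤ × ℤ) : ev x = (x.1 : ℂ) + (x.2 : ℂ) * ω := rfl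

lemma ev_mE (x y : ℤ × ℤ) : ev (mE x y) = ev x * ev y := by
  simp only [ev_apply, mE]; push_cast
  linear_combination (-(x.2 : ℂ) * y.2) * ω_sq

lemma ev_cE (x : ℤ × ℤ) : ev (cE x) = conj (ev x) := by
  simp only [ev_apply, cE, map_add, map_mul, ω_conj, map_intCast]; push_cast
  ring

def toV (x : VE) : V := fun i => ev (x i)

lemma herm_eq (u v : V) : herm u v =
  -(conj (u 0) * v 0 + conj (u 1) * v 1 + conj (u 2) * v 2 + conj (u 3) * v 3 +
    conj (u 4) * v 4 + conj (u 5) * v 5 + conj (u 6) * v 6 + conj (u 7) * v 7 +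
    conj (u 8) * v 8 + conj (u 9) * v 9 + conj (u 10) * v 10 + conj (u 11) * v 11) +
    conj (u 12) * conj θ * v 13 + conj (u 13) * θ * v 12 := by
  unfold herm
  rw [Fin.sum_univ_castSucc, Fin.sum_univ_castSucc, Fin.sum_univ_castSucc, Fin.sum_univ_castSucc,
    Fin.sum_univ_eight]
  rfl

lemma herm_toV (u v : VE) : herm (toV u) (toV v) = ev (hermE u v) := by
  have h1 : ev (1, 2) = θ := by rw [θ_val, ev_apply]; norm_num
  have h2 : ev (-1, -2) = conj θ := by rw [θ_conj, θ_val, ev_apply]; push_cast; ring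
  rw [herm_eq]
  simp only [hermE, map_add, map_neg, ev_mE, ev_cE, h1, h2, toV]

lemma pt_eq (i : Fin 13) : pt i = toV (ptE i) := by
  have q := qc_val
  have w := ω_sq
  fin_cases i <;> ext k <;> fin_cases k <;>
    simp [pt, ptE, toV, ev_apply, rA, rC1, rC2, rC3, rE1, rE2, rE3, rA1, rA2, rA3, rG1, rG2,
      rG3, q, w] <;> ring

lemma lnr_eq (i : Fin 13) : lnr i = toV (lnE i) := by
  have q := qc_val
  have w := ω_sq
  have t := θ_val
  fin_cases i <;> ext k <;> fin_cases k <;>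
    simp [lnr, lnE, toV, ev_apply, rF, rB1, rB2, rB3, rD1, rD2, rD3, rF1, rF2, rF3, rZ1, rZ2,
      rZ3, q, w, t] <;> ring

lemma hpp (i j : Fin 13) : herm (pt i) (pt j) = if i = j then -3 else 0 := by
  have h : ∀ i j : Fin 13, hermE (ptE i) (ptE j) = if i = j then (-3, 0) else (0, 0) := by
    decide +kernel
  rw [pt_eq, pt_eq, herm_toV, h]
  split_ifs <;> simp [ev_apply]

lemma hplE : ∀ i j : Fin 13, hermE (ptE i) (lnE j) = (2, 1) ∨ hermE (ptE i) (lnE j) = (0, 0) := by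
  decide +kernel

lemma hpl_tu (i j : Fin 13) : herm (pt (sg i)) (lnr (tu j)) = herm (pt i) (lnr j) := by
  have h : ∀ i j : Fin 13, hermE (ptE (sg i)) (lnE (tu j)) = hermE (ptE i) (lnE j) := by
    decide +kernel
  rw [pt_eq, lnr_eq, herm_toV, h, pt_eq, lnr_eq, herm_toV]

lemma adj_iff (i j : Fin 13) : Adj (pt i) (lnr j) ↔ hermE (ptE i) (lnE j) = (2, 1) := by
  unfold Adj
  rw [pt_eq, lnr_eq, herm_toV]
  constructor
  · intro h
    rcases hplE i j with h' | h'
    · exact h'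
    · rw [h'] at h
      have : Real.sqrt 3 ≠ 0 := by positivity
      simp [ev_apply] at h
      exact absurd h.symm this
  · intro h
    rw [h, Complex.norm_def]
    congr 1
    simp [ev_apply, Complex.normSq_apply, ω_re, ω_im]
    nlinarith [s3]

lemma wP_eq (j : Fin 13) : wPvec (lnr j) = toV wPE := by
  have h : ∀ (j : Fin 13) (k : Fin 14), mE (1, -1) (lnE j k) +
      ∑ i : Fin 13, (if hermE (ptE i) (lnE j) = (2, 1) then ptE i k else 0) = wPE k := by
    decide +kernel
  ext k
  have c : ω ^ 2 * θ = ev (1, -1) := by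
    rw [ev_apply, θ_val]; push_cast; linear_combination (1 + 2 * ω) * ω_sq - 2 * ω_sq
  simp only [wPvec, toV, ← h j k, map_add, ev_mE, map_sum, c, Pi.add_apply, Pi.smul_apply,
    smul_eq_mul, Finset.sum_apply, lnr_eq j]
  congr 1
  refine Finset.sum_congr rfl fun i _ => ?_
  have a := adj_iff i j
  by_cases hh : hermE (ptE i) (lnE j) = (2, 1)
  · rw [if_pos hh, if_pos (a.2 hh), pt_eq]; rfl
  · rw [if_neg hh, if_neg (fun x => hh (a.1 x))]; simp

lemma wL_eq (i : Fin 13) : wLvec (pt i) = toV wLE := by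
  have h : ∀ (i : Fin 13) (k : Fin 14), mE (2, 1) (ptE i k) +
      ∑ j : Fin 13, (if hermE (ptE i) (lnE j) = (2, 1) then lnE j k else 0) = wLE k := by
    decide +kernel
  ext k
  have c : -(ω * θ) = ev (2, 1) := by
    rw [ev_apply, θ_val]; push_cast; linear_combination -2 * ω_sq
  simp only [wLvec, toV, ← h i k, map_add, ev_mE, map_sum, c, Pi.add_apply, Pi.smul_apply,
    smul_eq_mul, Finset.sum_apply, pt_eq i]
  congr 1
  refine Finset.sum_congr rfl fun j _ => ?_
  have a := adj_iff i j
  by_cases hh : hermE (ptE i) (lnE j) = (2, 1)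
  · rw [if_pos hh, if_pos (a.2 hh), lnr_eq]; rfl
  · rw [if_neg hh, if_neg (fun x => hh (a.1 x))]; simp

def wP : V := toV wPE

def wL : V := toV wLE

lemma hPp (i : Fin 13) : herm wP (pt i) = 0 := by
  have h : ∀ i, hermE wPE (ptE i) = 0 := by decide +kernel
  rw [wP, pt_eq, herm_toV, h, map_zero]

lemma hpP (i : Fin 13) : herm (pt i) wP = 0 := by
  have h : ∀ i, hermE (ptE i) wPE = 0 := by decide +kernel
  rw [wP, pt_eq, herm_toV, h, map_zero]

lemma hLl (i : Fin 13) : herm wL (lnr i) = 0 := by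
  have h : ∀ i, hermE wLE (lnE i) = 0 := by decide +kernel
  rw [wL, lnr_eq, herm_toV, h, map_zero]

lemma hlL (i : Fin 13) : herm (lnr i) wL = 0 := by
  have h : ∀ i, hermE (lnE i) wLE = 0 := by decide +kernel
  rw [wL, lnr_eq, herm_toV, h, map_zero]

lemma hpL (i : Fin 13) : herm (pt i) wL = ev (2, 1) := by
  have h : ∀ i, hermE (ptE i) wLE = (2, 1) := by decide +kernel
  rw [wL, pt_eq, herm_toV, h]

lemma hlP (i : Fin 13) : herm (lnr i) wP = ev (1, -1) := by
  have h : ∀ i, hermE (lnE i) wPE = (1, -1) := by decide +kernel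
  rw [wP, lnr_eq, herm_toV, h]

lemma hPl (i : Fin 13) : herm wP (lnr i) = ev (2, 1) := by
  have h : ∀ i, hermE wPE (lnE i) = (2, 1) := by decide +kernel
  rw [wP, lnr_eq, herm_toV, h]

lemma hPP : herm wP wP = 3 := by
  have h : hermE wPE wPE = (3, 0) := by decide +kernel
  rw [wP, herm_toV, h, ev_apply]; norm_num

lemma hLL : herm wL wL = 3 := by
  have h : hermE wLE wLE = (3, 0) := by decide +kernel
  rw [wL, herm_toV, h, ev_apply]; norm_num

lemma hPL : herm wP wL = 8 + 4 * ω := by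
  have h : hermE wPE wLE = (8, 4) := by decide +kernel
  rw [wP, wL, herm_toV, h, ev_apply]; norm_num

lemma hLP : herm wL wP = 4 - 4 * ω := by
  have h : hermE wLE wPE = (4, -4) := by decide +kernel
  rw [wP, wL, herm_toV, h, ev_apply]; push_cast; ring

lemma herm_conj (u v : V) : conj (herm u v) = herm v u := by
  simp only [herm_eq, map_add, map_neg, map_mul, Complex.conj_conj]; ring

/-- `herm u` as a linear map -/
def hermL (u : V) : V →ₗ[ℂ] ℂ where
  toFun := herm u
  map_add' x y := by simp only [herm_eq, Pi.add_apply]; ring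
  map_smul' a x := by
    simp only [herm_eq, Pi.smul_apply, smul_eq_mul, RingHom.id_apply]; ring

lemma hermL_apply (u v : V) : hermL u v = herm u v := rfl

/-- the linear map sending `pt i` to `pt (f i)` and fixing `wP` -/
def T (f : Fin 13 → Fin 13) : V →ₗ[ℂ] V :=
  (∑ i : Fin 13, (hermL (pt i)).smulRight ((-1 / 3 : ℂ) • pt (f i))) +
    (hermL wP).smulRight ((1 / 3 : ℂ) • wP)

lemma T_apply (f : Fin 13 → Fin 13) (v : V) : T f v =
    (∑ i : Fin 13, herm (pt i) v • ((-1 / 3 : ℂ) • pt (f i))) +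
      herm wP v • ((1 / 3 : ℂ) • wP) := by
  simp [T, hermL_apply]

def bE (k : Fin 14) : VE := fun m => if m = k then (1, 0) else (0, 0)

lemma T_id : T id = LinearMap.id := by
  apply (Pi.basisFun ℂ (Fin 14)).ext
  intro k
  have hk : (Pi.basisFun ℂ (Fin 14)) k = toV (bE k) := by
    ext m
    simp only [Pi.basisFun_apply, Pi.single_apply, toV, bE]
    split_ifs <;> simp [ev_apply]
  have h : ∀ k m : Fin 14, -(∑ i : Fin 13, mE (hermE (ptE i) (bE k)) (ptE i m)) +
      mE (hermE wPE (bE k)) (wPE m) = mE (3, 0) (bE k m) := by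
    decide +kernel
  rw [hk, T_apply]
  ext m
  have h' := congrArg ev (h k m)
  simp only [map_add, map_neg, map_sum, ev_mE, ← herm_toV] at h'
  have h3 : ev (3, 0) = 3 := by rw [ev_apply]; norm_num
  rw [h3] at h'
  simp only [id, LinearMap.id_apply, Pi.add_apply, Finset.sum_apply, Pi.smul_apply, smul_eq_mul]
  have e : ∀ i, herm (pt i) (toV (bE k)) * (-1 / 3 * pt i m) =
      (-1 / 3) * (herm (toV (ptE i)) (toV (bE k)) * ev (ptE i m)) := by
    intro i
    rw [pt_eq]
    simp only [toV]
    ring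
  simp only [e, ← Finset.mul_sum]
  simp only [wP]
  have e2 : toV wPE m = ev (wPE m) := rfl
  have e3 : toV (bE k) m = ev (bE k m) := rfl
  rw [e2, e3]
  linear_combination (1 / 3) * h'

lemma expand (v : V) : (∑ i : Fin 13, herm (pt i) v • ((-1 / 3 : ℂ) • pt i)) +
      herm wP v • ((1 / 3 : ℂ) • wP) = v := by
  have := T_apply id v
  rw [T_id] at this
  exact this.symm

lemma hp_T (f : Fin 13 ≃ Fin 13) (j : Fin 13) (v : V) :
    herm (pt (f j)) (T f v) = herm (pt j) v := by
  rw [← hermL_apply, T_apply]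
  simp only [map_add, map_sum, map_smul, hermL_apply, hpp, hpP, smul_eq_mul, mul_zero, add_zero,
    EmbeddingLike.apply_eq_iff_eq, mul_ite, Finset.sum_ite_eq, Finset.mem_univ, if_true]
  ring

lemma hP_T (f : Fin 13 ≃ Fin 13) (v : V) : herm wP (T f v) = herm wP v := by
  rw [← hermL_apply, T_apply]
  simp only [map_add, map_sum, map_smul, hermL_apply, hPp, hPP, smul_eq_mul, mul_zero,
    Finset.sum_const_zero]
  ring

lemma herm_T (f : Fin 13 ≃ Fin 13) (u v : V) : herm (T f u) (T f v) = herm u v := by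
  have h1 : herm (T f u) (T f v) = (∑ i : Fin 13, herm (pt i) v * ((-1 / 3 : ℂ) * herm u (pt i))) +
      herm wP v * ((1 / 3 : ℂ) * herm u wP) := by
    rw [← hermL_apply, T_apply f v]
    simp only [map_add, map_sum, map_smul, hermL_apply, smul_eq_mul]
    rw [← herm_conj wP (T f u), hP_T, herm_conj]
    congr 1
    refine Finset.sum_congr rfl fun i _ => ?_
    rw [← herm_conj (pt (f i)) (T f u), hp_T, herm_conj]
  rw [h1]
  conv_rhs => rw [← expand v, ← hermL_apply]
  simp only [map_add, map_sum, map_smul, hermL_apply, smul_eq_mul]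

lemma T_inv (f g : Fin 13 ≃ Fin 13) (h : ∀ i, g (f i) = i) (v : V) : T g (T f v) = v := by
  rw [T_apply, hP_T, ← f.sum_comp]
  simp only [hp_T, h]
  exact expand v

def sgE : Fin 13 ≃ Fin 13 := Equiv.ofBijective sg (by decide +kernel)

lemma sgE_apply (i : Fin 13) : sgE i = sg i := rfl

def gS : V ≃ₗ[ℂ] V :=
  LinearEquiv.ofLinearMap (T sgE) (T sgE.symm)
    (LinearMap.ext fun v => T_inv _ _ (fun i => by simp) v)
    (LinearMap.ext fun v => T_inv _ _ (fun i => by simp) v)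

lemma gS_apply (v : V) : gS v = T sgE v := rfl

lemma gS_pt (i : Fin 13) : gS (pt i) = pt (sg i) := by
  rw [gS_apply, T_apply]
  simp only [hpp, hPp, zero_smul, add_zero]
  rw [Finset.sum_eq_single i]
  · rw [if_pos rfl, smul_smul, sgE_apply]; norm_num
  · intro b _ hb; rw [if_neg hb, zero_smul]
  · simp

lemma gS_lnr (j : Fin 13) : gS (lnr j) = lnr (tu j) := by
  rw [gS_apply, T_apply, hPl]
  conv_rhs => rw [← expand (lnr (tu j)), hPl, ← sgE.sum_comp]
  congr 1
  refine Finset.sum_congr rfl fun i _ => ?_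
  rw [sgE_apply, hpl_tu]

/-! ### The lattice -/

lemma EisP.add {x y : ℂ} (hx : EisP x) (hy : EisP y) : EisP (x + y) := by
  obtain ⟨a, b, rfl⟩ := hx
  obtain ⟨c, d, rfl⟩ := hy
  exact ⟨a + c, b + d, by push_cast; ring⟩

lemma EisP.neg {x : ℂ} (hx : EisP x) : EisP (-x) := by
  obtain ⟨a, b, rfl⟩ := hx
  exact ⟨-a, -b, by push_cast; ring⟩

lemma EisP.sub {x y : ℂ} (hx : EisP x) (hy : EisP y) : EisP (x - y) := by
  rw [sub_eq_add_neg]; exact hx.add hy.neg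

lemma EisP.mul {x y : ℂ} (hx : EisP x) (hy : EisP y) : EisP (x * y) := by
  obtain ⟨a, b, rfl⟩ := hx
  obtain ⟨c, d, rfl⟩ := hy
  refine ⟨(mE (a, b) (c, d)).1, (mE (a, b) (c, d)).2, ?_⟩
  exact (ev_mE (a, b) (c, d)).symm

lemma EisP.conj' {x : ℂ} (hx : EisP x) : EisP (conj x) := by
  obtain ⟨a, b, rfl⟩ := hx
  exact ⟨(cE (a, b)).1, (cE (a, b)).2, (ev_cE (a, b)).symm⟩

lemma EisP_int (n : ℤ) : EisP n := ⟨n, 0, by simp⟩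

lemma EisP_two : EisP 2 := ⟨2, 0, by simp⟩

lemma EisP_one : EisP 1 := ⟨1, 0, by simp⟩

lemma EisP_ω : EisP ω := ⟨0, 1, by simp⟩

lemma EisP_θ : EisP θ := ⟨1, 2, by rw [θ_val]; norm_num⟩

lemma EisP_ev (x : ℤ × ℤ) : EisP (ev x) := ⟨x.1, x.2, rfl⟩

/-- divisibility by `θ` -/
def Th (z : ℂ) : Prop := ∃ e, EisP e ∧ z = θ * e

lemma Th.add {x y : ℂ} (hx : Th x) (hy : Th y) : Th (x + y) := by
  obtain ⟨a, ha, rfl⟩ := hx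
  obtain ⟨b, hb, rfl⟩ := hy
  exact ⟨a + b, ha.add hb, by ring⟩

lemma Th.neg {x : ℂ} (hx : Th x) : Th (-x) := by
  obtain ⟨a, ha, rfl⟩ := hx
  exact ⟨-a, ha.neg, by ring⟩

lemma Th.mul {x y : ℂ} (hx : EisP x) (hy : Th y) : Th (x * y) := by
  obtain ⟨b, hb, rfl⟩ := hy
  exact ⟨x * b, hx.mul hb, by ring⟩

lemma Th.eis {x : ℂ} (hx : Th x) : EisP x := by
  obtain ⟨a, ha, rfl⟩ := hx
  exact EisP_θ.mul ha

lemma Th_three (n : ℤ) : Th (3 * n) :=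
  ⟨-θ * n, EisP_θ.neg.mul (EisP_int n), by linear_combination (n : ℂ) * θ_sq⟩

lemma Th_res {x : ℂ} (hx : EisP x) : ∃ n : ℤ, Th (x - n) := by
  obtain ⟨a, b, rfl⟩ := hx
  refine ⟨a + b, b * (1 + ω), (EisP_int b).mul (EisP_one.add EisP_ω), ?_⟩
  rw [θ_val]; push_cast; linear_combination (-2 * (b : ℂ)) * ω_sq

lemma Th_ev {x : ℤ × ℤ} (h : (x.1 + x.2) % 3 = 0) : Th (ev x) := by
  obtain ⟨n, hn⟩ := Int.dvd_of_emod_eq_zero h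
  have h2 := Th_three n
  have h3 : Th (x.2 * (ω - 1)) := Th.mul (EisP_int _)
    ⟨1 + ω, EisP_one.add EisP_ω, by rw [θ_val]; linear_combination -2 * ω_sq⟩
  have h4 := h2.add h3
  have hn' : (x.1 : ℂ) + x.2 = 3 * n := by exact_mod_cast hn
  have : ev x = 3 * n + x.2 * (ω - 1) := by rw [ev_apply]; linear_combination hn'
  rw [this]; exact h4

def E8' (a b c d : ℂ) : Prop := EisP a ∧ EisP b ∧ Th (a + b - c) ∧ Th (b + c + d)

lemma inE8_iff (w : Fin 4 → ℂ) : inE8 w ↔ E8' (w 0) (w 1) (w 2) (w 3) := by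
  constructor
  · rintro ⟨hE, s, t, h⟩
    have h' : ∀ i, Th (w i - ((tet1 i * s + tet2 i * t : ℤ) : ℂ)) := by
      intro i
      obtain ⟨a, b, hab⟩ := h i
      exact ⟨_, ⟨a, b, rfl⟩, hab⟩
    have h0 := h' 0
    have h1 := h' 1
    have h2 := h' 2
    have h3 := h' 3
    simp [tet1, tet2] at h0 h1 h2 h3
    refine ⟨hE 0, hE 1, ?_, ?_⟩
    · have := ((h0.add h1).add h2.neg).add (Th_three s)
      convert this using 1; ring
    · have := ((h1.add h2).add h3).add (Th_three t)
      convert this using 1; ring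
  · rintro ⟨e0, e1, h1, h2⟩
    have e2 : EisP (w 2) := by
      have := (e0.add e1).sub h1.eis
      convert this using 1; ring
    have e3 : EisP (w 3) := by
      have := (h2.eis.sub e1).sub e2
      convert this using 1; ring
    obtain ⟨s, hs⟩ := Th_res e0
    obtain ⟨r, hr⟩ := Th_res e1
    have key : ∀ i, Th (w i - ((tet1 i * s + tet2 i * (r - s) : ℤ) : ℂ)) := by
      intro i
      fin_cases i
      · simpa [tet1, tet2] using hs
      · simpa [tet1, tet2] using hr
      · have := ((hs.add hr).add h1.neg).add (Th_three s)
        simp [tet1, tet2]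
        convert this using 1; ring
      · have := (((h2.add h1).add hs.neg).add (Th.mul EisP_two hr.neg)).add (Th_three (-r))
        simp [tet1, tet2]
        convert this using 1; push_cast; ring
    refine ⟨?_, s, r - s, ?_⟩
    · intro i
      fin_cases i
      exacts [e0, e1, e2, e3]
    · intro i
      obtain ⟨e, ⟨a, b, rfl⟩, h⟩ := key i
      exact ⟨a, b, h⟩

lemma L_iff (v : V) : v ∈ Lset ↔ E8' (v 0) (v 1) (v 2) (v 3) ∧ E8' (v 4) (v 5) (v 6) (v 7) ∧
    E8' (v 8) (v 9) (v 10) (v 11) ∧ EisP (v 12) ∧ EisP (v 13) := by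
  unfold Lset
  rw [Set.mem_ofPred_eq, Fin.forall_fin_succ, Fin.forall_fin_succ, Fin.forall_fin_one]
  simp only [inE8_iff, and_assoc]
  rfl

lemma E8_pair {a b c d a' b' c' d' : ℂ} (h : E8' a b c d) (h' : E8' a' b' c' d') :
    Th (conj a * a' + conj b * b' + conj c * c' + conj d * d') := by
  obtain ⟨ha, hb, ⟨x, hx, hxe⟩, ⟨y, hy, hye⟩⟩ := h
  obtain ⟨ha', hb', ⟨x', hx', hxe'⟩, ⟨y', hy', hye'⟩⟩ := h'
  have hc : c = a + b - θ * x := by linear_combination -hxe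
  have hd : d = -a - 2 * b + θ * (x + y) := by linear_combination hye + hxe
  have hc' : c' = a' + b' - θ * x' := by linear_combination -hxe'
  have hd' : d' = -a' - 2 * b' + θ * (x' + y') := by linear_combination hye' + hxe'
  have hz := hx.add hy
  have hz' := hx'.add hy'
  generalize x + y = z at *
  generalize x' + y' = z' at *
  subst hc hd hc' hd'
  have A := ha.conj'
  have B := hb.conj'
  have X := hx.conj'
  have Z := hz.conj'
  refine ⟨-θ * (conj a * a' + conj a * b' + conj b * a' + 2 * (conj b * b')) +
    (conj x * (a' + b') - (conj a + conj b) * x' - θ * (conj x * x') + conj z * (a' + 2 * b') -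
      (conj a + 2 * conj b) * z' - θ * (conj z * z')), ?_, ?_⟩
  · have := EisP_θ
    have := EisP_two
    repeat (first | assumption | apply EisP.add | apply EisP.sub | apply EisP.mul | apply EisP.neg)
  · simp only [map_add, map_sub, map_neg, map_mul, θ_conj, Complex.conj_ofNat]
    linear_combination (conj a * a' + conj a * b' + conj b * a' + 2 * (conj b * b')) * θ_sq

lemma L_pair {u v : V} (hu : u ∈ Lset) (hv : v ∈ Lset) : Th (herm u v) := by
  rw [L_iff] at hu hv
  obtain ⟨u1, u2, u3, u4, u5⟩ := hu
  obtain ⟨v1, v2, v3, v4, v5⟩ := hv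
  have := (((E8_pair u1 v1).add (E8_pair u2 v2)).add (E8_pair u3 v3)).neg
  have t1 : Th (conj (u 12) * conj θ * v 13) :=
    ⟨-(conj (u 12) * v 13), (u4.conj'.mul v5).neg, by rw [θ_conj]; ring⟩
  have t2 : Th (conj (u 13) * θ * v 12) :=
    ⟨conj (u 13) * v 12, u5.conj'.mul v4, by ring⟩
  have := (this.add t1).add t2
  rw [herm_eq]
  convert this using 1; ring

/-- decidable criterion for lattice membership in the model -/
def chk (x : VE) : Prop :=
  (((x 0 + x 1 - x 2).1 + (x 0 + x 1 - x 2).2) % 3 = 0 ∧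
    ((x 1 + x 2 + x 3).1 + (x 1 + x 2 + x 3).2) % 3 = 0) ∧
  (((x 4 + x 5 - x 6).1 + (x 4 + x 5 - x 6).2) % 3 = 0 ∧
    ((x 5 + x 6 + x 7).1 + (x 5 + x 6 + x 7).2) % 3 = 0) ∧
  (((x 8 + x 9 - x 10).1 + (x 8 + x 9 - x 10).2) % 3 = 0 ∧
    ((x 9 + x 10 + x 11).1 + (x 9 + x 10 + x 11).2) % 3 = 0)

instance (x : VE) : Decidable (chk x) := by unfold chk; infer_instance

lemma chk_E8 {a b c d : ℤ × ℤ} (h1 : ((a + b - c).1 + (a + b - c).2) % 3 = 0)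
    (h2 : ((b + c + d).1 + (b + c + d).2) % 3 = 0) : E8' (ev a) (ev b) (ev c) (ev d) := by
  refine ⟨EisP_ev _, EisP_ev _, ?_, ?_⟩
  · rw [← map_add, ← map_sub]; exact Th_ev h1
  · rw [← map_add, ← map_add]; exact Th_ev h2

lemma chk_L {x : VE} (h : chk x) : toV x ∈ Lset := by
  rw [L_iff]
  exact ⟨chk_E8 h.1.1 h.1.2, chk_E8 h.2.1.1 h.2.1.2, chk_E8 h.2.2.1 h.2.2.2, EisP_ev _, EisP_ev _⟩

lemma pt_L (i : Fin 13) : pt i ∈ Lset := by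
  have h : ∀ i, chk (ptE i) := by decide +kernel
  rw [pt_eq]; exact chk_L (h i)

lemma lnr_L (i : Fin 13) : lnr i ∈ Lset := by
  have h : ∀ i, chk (lnE i) := by decide +kernel
  rw [lnr_eq]; exact chk_L (h i)

lemma E_of_q {z : ℂ} (h : Th (-(conj qc * z))) : EisP z := by
  obtain ⟨e, he, h⟩ := h
  have hq : conj qc = θ * ω := by
    rw [qc_val, θ_val]; simp [ω_conj]; linear_combination -2 * ω_sq
  rw [hq] at h
  have h2 : ω * z = -e := by
    apply mul_left_cancel₀ θ_ne
    linear_combination -h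
  have h3 : z = (-1 - ω) * -e := by
    rw [← h2]; linear_combination z * ω_sq
  rw [h3]
  exact (EisP_one.neg.sub EisP_ω).mul he.neg

lemma L_dual (v : V) :
    v ∈ Lset ↔ (∀ i, Th (herm (pt i) v)) ∧ ∀ i, Th (herm (lnr i) v) := by
  refine ⟨fun h => ⟨fun i => L_pair (pt_L i) h, fun i => L_pair (lnr_L i) h⟩, ?_⟩
  rintro ⟨hp, hl⟩
  have a0 := hp 0
  have a1 := hp 1
  have a2 := hp 2
  have a3 := hp 3
  have a4 := hp 4
  have a5 := hp 5
  have a6 := hp 6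
  have b1 := hl 1
  have b4 := hl 4
  have b5 := hl 5
  have b6 := hl 6
  have b7 := hl 7
  have b8 := hl 8
  have b9 := hl 9
  simp [pt, rC1, rC2, rC3, rE1, rE2, rE3, herm_eq] at a1 a2 a3 a4 a5 a6
  simp [lnr, rD1, rD2, rD3, rF1, rF2, rF3, herm_eq] at b4 b5 b6 b7 b8 b9
  simp [pt, rA, herm_eq] at a0
  simp [lnr, rB1, herm_eq] at b1
  have e1 := E_of_q a1
  have e2 := E_of_q a2
  have e3 := E_of_q a3
  have e4 := E_of_q a4
  have e5 := E_of_q a5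
  have e6 := E_of_q a6
  have q : ∀ {a b c d : ℂ}, EisP a → EisP b → Th (a + b - c) → Th (b + c + d) → E8' a b c d :=
    fun h1 h2 h3 h4 => ⟨h1, h2, h3, h4⟩
  have f1 : E8' (v 0) (v 1) (v 2) (v 3) := by
    refine q e1 e4 ?_ ?_
    · convert b4.neg using 1; ring
    · convert b7.neg using 1; ring
  have f2 : E8' (v 4) (v 5) (v 6) (v 7) := by
    refine q e2 e5 ?_ ?_
    · convert b5.neg using 1; ring
    · convert b8.neg using 1; ring
  have f3 : E8' (v 8) (v 9) (v 10) (v 11) := by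
    refine q e3 e6 ?_ ?_
    · convert b6.neg using 1; ring
    · convert b9.neg using 1; ring
  have g13 : EisP (v 13) := by
    obtain ⟨_, _, t1, t2⟩ := f1
    have z : Th (v 0 + v 2 - v 3 - θ * v 13) := by
      convert b1.neg using 1; rw [θ_conj]; ring
    -- `v 0 + v 2 - v 3 = (v 0 + v 1 - v 2) - (v 1 + v 2 + v 3) + 3 * v 2`
    have e2' : EisP (v 2) := by
      have := (e1.add e4).sub t1.eis
      convert this using 1; ring
    have z3 : Th (3 * v 2) := ⟨-θ * v 2, EisP_θ.neg.mul e2', by linear_combination (v 2) * θ_sq⟩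
    have := (z.add ((t1.add t2.neg).add z3).neg)
    obtain ⟨e, he, hh⟩ := this
    have : v 13 = -e := by
      apply mul_left_cancel₀ θ_ne
      linear_combination -hh
    rw [this]; exact he.neg
  have g12 : EisP (v 12) := by
    obtain ⟨e, he, hh⟩ := a0
    rw [θ_conj, ω_conj] at hh
    have hh2 : ω * v 12 = e + v 13 := by
      apply mul_left_cancel₀ θ_ne
      linear_combination hh - θ * v 12 * ω_sq
    have : v 12 = -((1 + ω) * (e + v 13)) := by
      rw [← hh2]; linear_combination v 12 * ω_sq
    rw [this]
    exact ((EisP_one.add EisP_ω).mul (he.add g13)).neg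
  exact (L_iff v).2 ⟨f1, f2, f3, g12, g13⟩

lemma sg_surj : Function.Surjective sg := by decide +kernel

lemma tu_surj : Function.Surjective tu := by decide +kernel

lemma gS_herm (u v : V) : herm (gS u) (gS v) = herm u v := herm_T sgE u v

lemma image_range {f : V → V} {p : Fin 13 → V} {s : Fin 13 → Fin 13} (hs : Function.Surjective s)
    (h : ∀ i, f (p i) = p (s i)) : f '' Set.range p = Set.range p := by
  rw [← Set.range_comp]
  have : f ∘ p = p ∘ s := funext h
  rw [this, hs.range_comp]

lemma gS_mem : gS ∈ Gsub := by
  refine ⟨⟨fun v => ?_, gS_herm⟩, image_range sg_surj gS_pt, image_range tu_surj gS_lnr⟩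
  have h1 : (∀ i, Th (herm (pt i) (gS v))) ↔ ∀ i, Th (herm (pt i) v) := by
    rw [sg_surj.forall]; simp only [← gS_pt, gS_herm]
  have h2 : (∀ i, Th (herm (lnr i) (gS v))) ↔ ∀ i, Th (herm (lnr i) v) := by
    rw [tu_surj.forall]; simp only [← gS_lnr, gS_herm]
  rw [L_dual, L_dual, h1, h2]

lemma ev21 : ev (2, 1) = θ * -ω := by rw [ev_apply, θ_val]; push_cast; linear_combination 2 * ω_sq

lemma ev1m1 : ev (1, -1) = θ * ω ^ 2 := by
  rw [ev_apply, θ_val]; push_cast; linear_combination (-1 - 2 * ω) * ω_sq + 2 * ω_sq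

lemma ω_ne : ω ≠ 0 := Complex.exp_ne_zero _

lemma ω_cube : ω * ω ^ 2 = 1 := by rw [ω_sq]; linear_combination -ω_sq

lemma eis_cancel_ω {z : ℂ} (h : EisP (z * ω)) : EisP z := by
  have : z = (z * ω) * (ω * ω) := by linear_combination (-z) * ω_cube
  rw [this]
  exact h.mul (EisP_ω.mul EisP_ω)

lemma herm_comb (u : V) (a b : ℂ) : herm u (a • wP + b • wL) = a * herm u wP + b * herm u wL := by
  rw [← hermL_apply, map_add, map_smul, map_smul]; rfl

lemma comb_L {a b : ℂ} (ha : EisP a) (hb : EisP b) : a • wP + b • wL ∈ Lset := by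
  rw [L_dual]
  constructor
  · intro i
    rw [herm_comb, hpP, hpL, ev21]
    exact ⟨b * -ω, hb.mul EisP_ω.neg, by ring⟩
  · intro i
    rw [herm_comb, hlP, hlL, ev1m1]
    exact ⟨a * (ω * ω), ha.mul (EisP_ω.mul EisP_ω), by ring⟩

lemma prim {a b : ℂ} (h : a • wP + b • wL ∈ Lset) : EisP a ∧ EisP b := by
  rw [L_dual] at h
  obtain ⟨e, he, h1⟩ := h.1 0
  obtain ⟨f, hf, h2⟩ := h.2 0
  rw [herm_comb, hpP, hpL, ev21] at h1
  rw [herm_comb, hlP, hlL, ev1m1] at h2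
  constructor
  · apply eis_cancel_ω
    apply eis_cancel_ω
    have : a * ω * ω = f := by
      apply mul_left_cancel₀ θ_ne
      linear_combination h2
    rw [this]; exact hf
  · apply eis_cancel_ω
    have : b * ω = -e := by
      apply mul_left_cancel₀ θ_ne
      linear_combination -h1
    rw [this]; exact he.neg

lemma mem_EisSpan (v : V) :
    v ∈ EisSpan {wP, wL} ↔ ∃ a b, EisP a ∧ EisP b ∧ v = a • wP + b • wL := by
  unfold EisSpan
  rw [SetLike.mem_coe]
  constructor
  · intro h
    induction h using Submodule.span_induction with
    | mem x hx =>
      rcases hx with hx | hx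
      · rcases hx with rfl | hx
        · exact ⟨1, 0, EisP_one, by simpa using EisP_int 0, by simp⟩
        · rw [Set.mem_singleton_iff] at hx
          subst hx
          exact ⟨0, 1, by simpa using EisP_int 0, EisP_one, by simp⟩
      · obtain ⟨y, hy, rfl⟩ := hx
        rcases hy with rfl | hx
        · exact ⟨ω, 0, EisP_ω, by simpa using EisP_int 0, by simp⟩
        · rw [Set.mem_singleton_iff] at hx
          subst hx
          exact ⟨0, ω, by simpa using EisP_int 0, EisP_ω, by simp⟩
    | zero => exact ⟨0, 0, by simpa using EisP_int 0, by simpa using EisP_int 0, by simp⟩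
    | add x y _ _ hx hy =>
      obtain ⟨a, b, ha, hb, rfl⟩ := hx
      obtain ⟨c, d, hc, hd, rfl⟩ := hy
      exact ⟨a + c, b + d, ha.add hc, hb.add hd, by module⟩
    | smul n x _ hx =>
      obtain ⟨a, b, ha, hb, rfl⟩ := hx
      refine ⟨n * a, n * b, (EisP_int n).mul ha, (EisP_int n).mul hb, ?_⟩
      rw [← Int.cast_smul_eq_zsmul ℂ n]
      module
  · rintro ⟨_, _, ⟨a, b, rfl⟩, ⟨c, d, rfl⟩, rfl⟩
    have e : ((a : ℂ) + b * ω) • wP + ((c : ℂ) + d * ω) • wL =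
        (a • wP + b • (ω • wP)) + (c • wL + d • (ω • wL)) := by
      simp only [← Int.cast_smul_eq_zsmul ℂ]
      module
    rw [e]
    have m1 : ∀ x ∈ ({wP, wL} : Set V), ∀ m n : ℤ, m • x + n • (ω • x) ∈
        Submodule.span ℤ (({wP, wL} : Set V) ∪ (fun y : V => ω • y) '' {wP, wL}) := by
      intro x hx m n
      apply Submodule.add_mem
      · exact Submodule.smul_mem _ _ (Submodule.subset_span (Or.inl hx))
      · exact Submodule.smul_mem _ _ (Submodule.subset_span (Or.inr ⟨x, hx, rfl⟩))
    exact Submodule.add_mem _ (m1 wP (by simp) a b) (m1 wL (by simp) c d)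

lemma determined {d : V} (h1 : ∀ i, herm (pt i) d = 0) (h2 : herm (lnr 0) d = 0) : d = 0 := by
  have e := expand d
  simp only [h1, zero_smul, Finset.sum_const_zero, zero_add] at e
  have e2 : hermL (lnr 0) (herm wP d • ((1 / 3 : ℂ) • wP)) = 0 := by rw [e]; exact h2
  simp only [map_smul, hermL_apply, hlP, smul_eq_mul, ev1m1] at e2
  have : herm wP d = 0 := by
    have hne : (1 / 3 : ℂ) * (θ * ω ^ 2) ≠ 0 :=
      mul_ne_zero (by norm_num) (mul_ne_zero θ_ne (pow_ne_zero 2 ω_ne))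
    exact (mul_eq_zero.1 e2).resolve_right hne
  rw [← e, this, zero_smul]

lemma fixed_of_const {w : V} {a b : ℂ} (h1 : ∀ i, herm (pt i) w = a)
    (h2 : ∀ i, herm (lnr i) w = b) {g : V ≃ₗ[ℂ] V} (hg : g ∈ Gsub) : g w = w := by
  obtain ⟨⟨_, hh⟩, hp, hl⟩ := hg
  apply sub_eq_zero.1
  apply determined
  · intro i
    have : pt i ∈ (⇑g) '' Set.range pt := by rw [hp]; exact Set.mem_range_self i
    obtain ⟨_, ⟨j, rfl⟩, hj⟩ := this
    rw [← hermL_apply, map_sub, hermL_apply, hermL_apply, h1]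
    rw [← hj, hh, h1, sub_self]
  · have : lnr 0 ∈ (⇑g) '' Set.range lnr := by rw [hl]; exact Set.mem_range_self 0
    obtain ⟨_, ⟨j, rfl⟩, hj⟩ := this
    rw [← hermL_apply, map_sub, hermL_apply, hermL_apply, h2]
    rw [← hj, hh, h2, sub_self]

lemma sg_trans (f : Fin 13 → ℂ) (h : ∀ i, f (sg i) = f i) (i : Fin 13) : f i = f 0 := by
  have hn : ∀ i : Fin 13, ∃ n : Fin 13, sg^[(n : ℕ)] 0 = i := by decide +kernel
  obtain ⟨n, rfl⟩ := hn i
  induction (n : ℕ) with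
  | zero => rfl
  | succ k ih => rw [Function.iterate_succ_apply', h, ih]

lemma fixed_span {v : V} (h : gS v = v) : ∃ a b : ℂ, v = a • wP + b • wL := by
  have h1 : ∀ i, herm (pt (sg i)) v = herm (pt i) v := by
    intro i
    conv_lhs => rw [← gS_pt, ← h, gS_herm]
  have h2 := sg_trans (fun i => herm (pt i) v) h1
  have hne : ev (2, 1) ≠ 0 := by rw [ev21]; exact mul_ne_zero θ_ne (neg_ne_zero.2 ω_ne)
  have hne2 : ev (1, -1) ≠ 0 := by rw [ev1m1]; exact mul_ne_zero θ_ne (pow_ne_zero 2 ω_ne)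
  refine ⟨herm (lnr 0) v / ev (1, -1), herm (pt 0) v / ev (2, 1), ?_⟩
  apply sub_eq_zero.1
  apply determined
  · intro i
    rw [← hermL_apply, map_sub, hermL_apply, hermL_apply, herm_comb, hpP, hpL, h2]
    field_simp
    ring
  · rw [← hermL_apply, map_sub, hermL_apply, hermL_apply, herm_comb, hlP, hlL]
    field_simp
    ring

/-- `w_𝒫 = ω²θl + Σ_{x ∈ l} x` is independent of the line `l`, and
`w_ℒ = -ωθx + Σ_{l ∋ x} l` is independent of the point `x`; both have norm `3`,
`⟨w_𝒫, w_ℒ⟩ = -4θω`, `w_𝒫` is orthogonal to the point roots and `w_ℒ` to the line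
roots; the sublattice `F` spanned by them over `ℰ` is primitive, has signature
`(1,1)` and discriminant `39` (Gram determinant `-39`), and is exactly the
sublattice of `L` fixed pointwise by `G`. -/
theorem stmt13 :
    (∀ j k : Fin 13, wPvec (lnr j) = wPvec (lnr k)) ∧
    (∀ j k : Fin 13, wLvec (pt j) = wLvec (pt k)) ∧
    (herm (wPvec (lnr 0)) (wPvec (lnr 0)) = 3) ∧
    (herm (wLvec (pt 0)) (wLvec (pt 0)) = 3) ∧
    (herm (wPvec (lnr 0)) (wLvec (pt 0)) = -(4 * θ * ω)) ∧
    (∀ i : Fin 13, herm (wPvec (lnr 0)) (pt i) = 0) ∧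
    (∀ i : Fin 13, herm (wLvec (pt 0)) (lnr i) = 0) ∧
    (∀ v ∈ Lset, v ∈ (Submodule.span ℂ ({wPvec (lnr 0), wLvec (pt 0)} : Set V)) →
      v ∈ EisSpan {wPvec (lnr 0), wLvec (pt 0)}) ∧
    (∃ v ∈ (Submodule.span ℂ ({wPvec (lnr 0), wLvec (pt 0)} : Set V)),
      (herm v v).re < 0) ∧
    (herm (wPvec (lnr 0)) (wPvec (lnr 0)) * herm (wLvec (pt 0)) (wLvec (pt 0)) -
      herm (wPvec (lnr 0)) (wLvec (pt 0)) * herm (wLvec (pt 0)) (wPvec (lnr 0)) = -39) ∧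
    ({v : V | v ∈ Lset ∧ ∀ g ∈ Gsub, g v = v} =
      EisSpan {wPvec (lnr 0), wLvec (pt 0)}) := by
  have eP : ∀ j, wPvec (lnr j) = wP := wP_eq
  have eL : ∀ j, wLvec (pt j) = wL := wL_eq
  simp only [eP, eL]
  have tw : 8 + 4 * ω = -(4 * θ * ω) := by rw [θ_val]; linear_combination 8 * ω_sq
  refine ⟨fun _ _ => trivial, fun _ _ => trivial, hPP, hLL, hPL.trans tw, hPp, hLl, ?_, ?_, ?_, ?_⟩
  · intro v hv hs
    obtain ⟨a, b, rfl⟩ := Submodule.mem_span_pair.1 hs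
    obtain ⟨ha, hb⟩ := prim hv
    exact (mem_EisSpan _).2 ⟨a, b, ha, hb, rfl⟩
  · refine ⟨wP - wL, Submodule.mem_span_pair.2 ⟨1, -1, by module⟩, ?_⟩
    have e : wP - wL = toV (wPE - wLE) := by
      ext k; simp [wP, wL, toV]
    have h : hermE (wPE - wLE) (wPE - wLE) = (-6, 0) := by decide +kernel
    rw [e, herm_toV, h, ev_apply]
    simp
  · rw [hPP, hLL, hPL, hLP]; linear_combination 16 * ω_sq
  · ext v
    rw [Set.mem_ofPred_eq, mem_EisSpan]
    constructor
    · rintro ⟨hv, hg⟩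
      obtain ⟨a, b, rfl⟩ := fixed_span (hg gS gS_mem)
      obtain ⟨ha, hb⟩ := prim hv
      exact ⟨a, b, ha, hb, rfl⟩
    · rintro ⟨a, b, ha, hb, rfl⟩
      refine ⟨comb_L ha hb, fun g hg => ?_⟩
      rw [map_add, map_smul, map_smul, fixed_of_const hpP hlP hg, fixed_of_const hpL hlL hg]

end Bimonster
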